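/- For all n ≥ k ≥ 1, the number of noncrossing partitions of [n] with exactly n−k+1 blocks equals the number of parallelogram polyominoes of size (n−k+1)×k; that is, |NC(n,k)| = |PP(n−k+1,k)|. -/

import Mathlib

namespace QtN

/-! ### Lattice paths and parallelogram polyominoes -/

/-- A step of a lattice path: east or north. -/
inductive Step : Type
  | E : Step
  | N : Step
  deriving DecidableEq, Repr

/-- Number of east steps of a path. -/
def countE (w : List Step) : ℕ := w.count Step.E

/-- Number of north steps of a path. -/
def countN (w : List Step) : ℕ := w.count Step.N

/-- Endpoint of a path started at the origin. -/
def pathPos (w : List Step) : ℕ × ℕ := (countE w, countN w)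

/-- The set of lattice points visited by a path started at the origin. -/
def pathPts (w : List Step) : Finset (ℕ × ℕ) :=
  ((List.range (w.length + 1)).map (fun i => pathPos (w.take i))).toFinset

/-- `colHeightsAux w h`: for each east step of `w` (in order), the number of north
steps preceding it, starting with `h` north steps already performed. -/
def colHeightsAux : List Step → ℕ → List ℕ
  | [], _ => []
  | Step.E :: r, h => h :: colHeightsAux r h
  | Step.N :: r, h => colHeightsAux r (h + 1)

/-- Height at which the path `w` crosses the vertical strip `i ≤ x ≤ i + 1`. -/
def colHeight (w : List Step) (i : ℕ) : ℕ := (colHeightsAux w 0).getD i 0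

/-- A parallelogram polyomino of size `m × n`: a pair of monotone lattice paths from
`(0,0)` to `(m,n)` (east/north steps), the upper path staying weakly above the lower
path, and the two paths meeting only at `(0,0)` and `(m,n)`. -/
structure Polyomino (m n : ℕ) : Type where
  lower : List Step
  upper : List Step
  lowerE : countE lower = m
  lowerN : countN lower = n
  upperE : countE upper = m
  upperN : countN upper = n
  above : ∀ i < m, colHeight lower i ≤ colHeight upper i
  meet : pathPts upper ∩ pathPts lower = {(0, 0), (m, n)}

/-- The area statistic: number of unit squares between the two paths,
minus `(m + n - 1)`. -/
def area {m n : ℕ} (P : Polyomino m n) : ℕ :=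
  (∑ i ∈ Finset.range m, (colHeight P.upper i - colHeight P.lower i)) - (m + n - 1)

/-- Where an eastward run at height `y`, starting at `x`, first hits the lower path. -/
def eastTarget (hL : ℕ → ℕ) (m x y : ℕ) : ℕ :=
  ((List.range m).filter (fun i => decide (x ≤ i ∧ y ≤ hL i))).headD m

/-- Total bounce contribution: from state `(x, y)` just after the `j`-th east-to-north
turn (counting the turns made so far), alternately go north until hitting the upper
path and east until hitting the lower path, each step contributing the number of
east-to-north turns preceding it. -/
def bounceAux (hU hL : ℕ → ℕ) (m n : ℕ) : ℕ → ℕ → ℕ → ℕ → ℕ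
  | 0, _, _, _ => 0
  | fuel + 1, x, y, j =>
    if x = m ∧ y = n then 0
    else
      let y' := hU (x - 1)
      let x' := if y' = n then m else eastTarget hL m x y'
      (j + 1) * ((y' - y) + (x' - x)) + bounceAux hU hL m n fuel x' y' (j + 1)

/-- The bounce statistic of a parallelogram polyomino: the bounce path starts with a
single east step (contributing `0`) and then alternates north runs (to the ceiling)
and east runs (to the floor); each step contributes the number of east-to-north turns
preceding it; finally `(m + n - 1)` is subtracted. -/
def bounce {m n : ℕ} (P : Polyomino m n) : ℕ :=
  bounceAux (colHeight P.upper) (colHeight P.lower) m n (m + n + 2) 1 0 0 - (m + n - 1)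

/-! ### Set partitions and noncrossing partitions -/

/-- Maximum of a finite set of naturals (`0` for the empty set). -/
def fmax (β : Finset ℕ) : ℕ := β.sup id

/-- Minimum of a finite set of naturals (`0` for the empty set). -/
def fmin (β : Finset ℕ) : ℕ := if h : β.Nonempty then β.min' h else 0

/-- A set partition of `{1, …, n}`, given by its finite set of blocks. -/
structure SetPartition (n : ℕ) : Type where
  blocks : Finset (Finset ℕ)
  not_empty_mem : ∅ ∉ blocks
  cover : ∀ i : ℕ, i ∈ Finset.Icc 1 n ↔ ∃ β ∈ blocks, i ∈ β
  disjoint : ∀ β ∈ blocks, ∀ γ ∈ blocks, β ≠ γ → Disjoint β γ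

/-- A family of blocks is noncrossing if there are no `a < b < c < d` with
`a, c` in one block and `b, d` in a different block. -/
def IsNoncrossing (bs : Finset (Finset ℕ)) : Prop :=
  ∀ a b c d : ℕ, a < b → b < c → c < d →
    ∀ β ∈ bs, ∀ γ ∈ bs, a ∈ β → c ∈ β → b ∈ γ → d ∈ γ → β = γ

/-- `NC n k`: noncrossing partitions of `{1, …, n}` with exactly `n - k + 1` blocks. -/
abbrev NC (n k : ℕ) : Type :=
  {P : SetPartition n // IsNoncrossing P.blocks ∧ P.blocks.card = n - k + 1}

/-- The skip statistic: `∑_{β} (max β - min β - |β| + 1)`. -/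
def skip (bs : Finset (Finset ℕ)) : ℕ :=
  ∑ β ∈ bs, ((fmax β + 1 - fmin β) - β.card)

/-- The non-singleton blocks of a partition. -/
def nsBlocks (bs : Finset (Finset ℕ)) : Finset (Finset ℕ) :=
  bs.filter (fun β => 2 ≤ β.card)

/-- The block of `bs` containing `x` (junk if there is not exactly one). -/
def blockContaining (bs : Finset (Finset ℕ)) (x : ℕ) : Finset ℕ :=
  (bs.filter (fun β => x ∈ β)).sup id

/-- For a noncrossing partition in `NC n 3`, the quadruple `(a, b, c, d)` describing its
non-singleton blocks: for two pair blocks `{a,b}` and `{c,d}` (with `a` the global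
minimum) this is `(a, b, c, d)`; for a single triple block `{a, b, c}` (`a < b < c`)
this is `(a, b, b, c)`. -/
def blockQuad (bs : Finset (Finset ℕ)) : ℕ × ℕ × ℕ × ℕ :=
  let A := blockContaining (nsBlocks bs) (fmin ((nsBlocks bs).sup id))
  if (nsBlocks bs).card = 1 then
    let l := A.sort (· ≤ ·)
    (l.getD 0 0, l.getD 1 0, l.getD 1 0, l.getD 2 0)
  else
    let B := ((nsBlocks bs).erase A).sup id
    (fmin A, fmax A, fmin B, fmax B)

/-- The leap statistic on `NC n 3`: `leap(ab|cd) = c - 2 + max(0, c - b)`,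
and `leap({a,b,c}) = b - 2` (the case `b = c`). -/
def leap (bs : Finset (Finset ℕ)) : ℕ :=
  let (_, b, c, _) := blockQuad bs
  (c - 2) + (c - b)

/-- The skew statistic on `NC n 3`: `skew(ab|cd) = c - 2 + a` if `b < c`, else `c - 2`;
`skew({a,b,c}) = b - 2` (the case `b = c`). -/
def skew (bs : Finset (Finset ℕ)) : ℕ :=
  let (a, b, c, _) := blockQuad bs
  if b < c then c - 2 + a else c - 2

/-- The mag statistic on `NC n 3`: `mag(ab|cd) = a + max(b, c) - 2 - ⌈(b - a)/2⌉`,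
and `mag({a,b,c}) = a + b - 2 - ⌈(b - a)/2⌉` (the case `b = c`). -/
def mag (bs : Finset (Finset ℕ)) : ℕ :=
  let (a, b, c, _) := blockQuad bs
  a + max b c - 2 - (b - a + 1) / 2

/-- The area statistic on noncrossing partitions:
`area(π) = ∑_{β, β' ∈ π} #{ i ∈ β' : i < max β < max β' }` (ordered pairs of blocks). -/
def ncArea (bs : Finset (Finset ℕ)) : ℕ :=
  ∑ β ∈ bs, ∑ γ ∈ bs, (γ.filter (fun i => i < fmax β ∧ fmax β < fmax γ)).card

/-- The elements of the non-singleton blocks, listed in increasing order, with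
the middle element of a size-3 block listed twice. -/
def nsList (bs : Finset (Finset ℕ)) : List ℕ :=
  let l := ((nsBlocks bs).sup id).sort (· ≤ ·)
  if l.length = 3 then [l.getD 0 0, l.getD 1 0, l.getD 1 0, l.getD 2 0] else l

/-- The multiset of block sizes of a partition. -/
def blockSizes (bs : Finset (Finset ℕ)) : Multiset ℕ := bs.val.map Finset.card

/-- The image of a partition of `{1, …, n}` under the flip `i ↦ n + 1 - i`. -/
def flipBlocks (n : ℕ) (bs : Finset (Finset ℕ)) : Finset (Finset ℕ) :=
  bs.image (fun β => β.image (fun i => n + 1 - i))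

/-! ### The mingarc statistic -/

/-- The gaps `ν_r = m_{r+1} - m_r - 1` between consecutive block minima
`m_1 < ⋯ < m_h` (with `m_{h+1} = n + 1`). -/
def nuList (n : ℕ) (bs : Finset (Finset ℕ)) : List ℕ :=
  let ms := ((bs.image fmin).sort (· ≤ ·)) ++ [n + 1]
  (List.range (bs.image fmin).card).map (fun r => ms.getD (r + 1) 0 - ms.getD r 0 - 1)

/-- Concatenation of `replicate ν c` over a list of pairs `(c, ν)`. -/
def repeatEach : List (ℕ × ℕ) → List ℕ
  | [] => []
  | p :: r => List.replicate p.2 p.1 ++ repeatEach r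

/-- The right endpoints `y_1 ≤ ⋯ ≤ y_{k-1}`: each block maximum `c_r` repeated
`ν_r` times, in increasing order. -/
def ysList (n : ℕ) (bs : Finset (Finset ℕ)) : List ℕ :=
  repeatEach (List.zip ((bs.image fmax).sort (· ≤ ·)) (nuList n bs))

/-- The left endpoints `x_1 < ⋯ < x_{k-1}`: the elements of `{1, …, n}` that are not
block maxima, in increasing order. -/
def xsList (n : ℕ) (bs : Finset (Finset ℕ)) : List ℕ :=
  ((Finset.Icc 1 n).filter (fun i => i ∉ bs.image fmax)).sort (· ≤ ·)

/-- Greedy left-to-right selection of arcs: keep the first arc, and thereafter keep the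
earliest arc whose left endpoint exceeds the right endpoint of the last kept arc. -/
def greedyArcs : List (ℕ × ℕ) → Option ℕ → List (ℕ × ℕ)
  | [], _ => []
  | a :: rest, none => a :: greedyArcs rest (some a.2)
  | a :: rest, some r =>
      if r < a.1 then a :: greedyArcs rest (some a.2) else greedyArcs rest (some r)

/-- The mingarc statistic: the sum of `n - y_i` over the greedily selected
candidate arcs `[x_i, y_i]`. -/
def mingarc (n : ℕ) (bs : Finset (Finset ℕ)) : ℕ :=
  ((greedyArcs (List.zip (xsList n bs) (ysList n bs)) none).map (fun p => n - p.2)).sum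

/-! ### The map η from polyominoes to noncrossing partitions -/

/-- Largest column index `i < m` with `colHeight lower i ≤ j`: the rightmost cell
adjacent to the floor in row `j`. -/
def eFloor {m k : ℕ} (P : Polyomino m k) (j : ℕ) : ℕ :=
  (((List.range m).filter (fun i => decide (colHeight P.lower i ≤ j))).getLastD 0)

/-- Smallest column index `i` with `colHeight upper i ≥ j + 1`: the leftmost cell
adjacent to the ceiling in row `j` (with default `m - 1`). -/
def fCeil {m k : ℕ} (P : Polyomino m k) (j : ℕ) : ℕ :=
  (((List.range m).filter (fun i => decide (j + 1 ≤ colHeight P.upper i))).headD (m - 1))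

/-- The number of cells adjacent to the ceiling in row `j`. -/
def rowCount {m k : ℕ} (P : Polyomino m k) (j : ℕ) : ℕ :=
  fCeil P (j + 1) - fCeil P j + 1

/-- Pick, `cnt` times, the largest label in `{1, …, L}` not used yet. -/
def pickRow : ℕ → ℕ → Finset ℕ → Finset ℕ
  | 0, _, _ => ∅
  | cnt + 1, L, used =>
      let x := fmax ((Finset.Icc 1 L) \ used)
      insert x (pickRow cnt L (insert x used))

/-- The blocks of `η(P)`: label the cells adjacent to the floor `1, …, n` going bottom
to top, left to right (the label of the floor cell in column `i`, row `j` is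
`i + j + 1`, and the labels present in rows `≤ j` are exactly `1, …, eFloor P j + j + 1`);
then going bottom to top, left to right over the cells adjacent to the ceiling, assign
to each the largest unused indexing label occurring in the same row or below; the
blocks are the label sets of the ceiling rows. -/
def etaBlocks {m k : ℕ} (P : Polyomino m k) : Finset (Finset ℕ) :=
  (((List.range k).foldl
      (fun st j =>
        let B := pickRow (rowCount P j) (eFloor P j + j + 1) st.1
        (st.1 ∪ B, B :: st.2))
      ((∅ : Finset ℕ), ([] : List (Finset ℕ)))).2).toFinset

/-!
Join consecutive elements of each block of a set partition by an arc. A noncrossing partition is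
determined by the sets `A` and `B` of left and right ends of its arcs, by matching parentheses, and
the pairs `(A, B)` that occur are those with `#A = #B` in which, up to every point, at least as many
arcs have been opened as are closed.

In a parallelogram polyomino the upper path starts and the lower path ends with a north step.
Record the other north steps of the upper path by the times at which they start, and those of the
lower path by the times at which they end. The two paths avoid each other precisely when the upper
one has made strictly more north steps at every intermediate time, and for the recorded sets this
is the same condition.
-/

open Finset

section Ends

variable {α : Type*} [LinearOrder α] {r s : Setoid α}

/-- The left ends of the arcs of `r`, where an arc joins two consecutive elements of a class;
equivalently, the elements that are not the largest of their class. -/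
def leftEnds (r : Setoid α) : Set α := {x | ∃ y, x < y ∧ r x y}

/-- The right ends of the arcs of `r`; equivalently, the elements that are not the smallest of
their class. -/
def rightEnds (r : Setoid α) : Set α := {x | ∃ y, y < x ∧ r y x}

/-- Equivalence relations whose classes are noncrossing; the counterpart of `IsNoncrossing` for
classes instead of blocks. -/
def IsNoncrossingRel (r : Setoid α) : Prop :=
  ∀ ⦃a b c d : α⦄, a < b → b < c → c < d → r a c → r b d → r a b

/-- The condition on finite sets `A`, `B` to be the left and the right ends of a family of arcs:
they are equinumerous, and up to any point there are at least as many left as right ends. -/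
structure IsBallot (A B : Finset α) : Prop where
  card_eq : #A = #B
  card_le (s : α) : #{b ∈ B | b ≤ s} ≤ #{a ∈ A | a < s}

lemma IsNoncrossingRel.rel_of_le (hr : IsNoncrossingRel r) {a b c d : α} (hab : a ≤ b)
    (hbc : b ≤ c) (hcd : c ≤ d) (hac : r a c) (hbd : r b d) : r a b := by
  rcases hab.eq_or_lt with rfl | hab
  · exact r.refl a
  rcases hbc.eq_or_lt with rfl | hbc
  · exact hac
  rcases hcd.eq_or_lt with rfl | hcd
  · exact r.trans hac (r.symm hbd)
  exact hr hab hbc hcd hac hbd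

lemma eq_of_rel_of_notMem_ends {x y : α} (hl : x ∉ leftEnds r) (hr : x ∉ rightEnds r)
    (hxy : r x y) : y = x := by
  rcases lt_trichotomy x y with h | h | h
  · exact absurd ⟨y, h, hxy⟩ hl
  · exact h.symm
  · exact absurd ⟨y, h, r.symm hxy⟩ hr

lemma exists_isGreatest_lt_rel (hl : (leftEnds r).Finite) {b : α} (hb : b ∈ rightEnds r) :
    ∃ p, IsGreatest {x | x < b ∧ r x b} p := by
  have hfin : {x | x < b ∧ r x b}.Finite := hl.subset fun x hx => ⟨b, hx⟩
  obtain ⟨p, hp, hmax⟩ := Set.exists_max_image _ id hfin hb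
  exact ⟨p, hp, hmax⟩

lemma exists_isLeast_gt_rel (hr : (rightEnds r).Finite) {a : α} (ha : a ∈ leftEnds r) :
    ∃ q, IsLeast {y | a < y ∧ r a y} q := by
  have hfin : {y | a < y ∧ r a y}.Finite := hr.subset fun y hy => ⟨a, hy⟩
  obtain ⟨q, hq, hmin⟩ := Set.exists_min_image _ id hfin ha
  exact ⟨q, hq, hmin⟩

/-! ### The ends of the arcs form a ballot pair -/

lemma exists_bijOn_rightEnds_leftEnds (hl : (leftEnds r).Finite) (hr : (rightEnds r).Finite) :
    ∃ p : α → α, Set.BijOn p (rightEnds r) (leftEnds r) ∧ ∀ b ∈ rightEnds r, p b < b := by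
  choose! p hp using fun b (hb : b ∈ rightEnds r) => exists_isGreatest_lt_rel hl hb
  have not_eq_of_lt : ∀ b ∈ rightEnds r, ∀ c ∈ rightEnds r, b < c → p b ≠ p c := by
    intro b hb c hc hbc h
    have hrel : r b c := r.trans (r.symm (hp b hb).1.2) (h ▸ (hp c hc).1.2)
    exact ((hp c hc).2 ⟨hbc, hrel⟩).not_gt (h ▸ (hp b hb).1.1)
  refine ⟨p, ⟨fun b hb => ⟨b, (hp b hb).1⟩, fun b hb c hc h => ?_, fun a ha => ?_⟩,
    fun b hb => (hp b hb).1.1⟩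
  · rcases lt_trichotomy b c with hbc | hbc | hbc
    · exact absurd h (not_eq_of_lt b hb c hc hbc)
    · exact hbc
    · exact absurd h.symm (not_eq_of_lt c hc b hb hbc)
  · obtain ⟨q, ⟨haq, hrel⟩, hmin⟩ := exists_isLeast_gt_rel hr ha
    have hq : q ∈ rightEnds r := ⟨a, haq, hrel⟩
    obtain ⟨⟨hlt, hpq⟩, hmax⟩ := hp q hq
    refine ⟨q, hq, ((hmax ⟨haq, hrel⟩).eq_or_lt.resolve_right fun h => ?_).symm⟩
    exact (hmin ⟨h, r.trans hrel (r.symm hpq)⟩).not_gt hlt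

theorem isBallot_of_ends {A B : Finset α} (hA : leftEnds r = A) (hB : rightEnds r = B) :
    IsBallot A B := by
  obtain ⟨p, hp, hlt⟩ := exists_bijOn_rightEnds_leftEnds (hA ▸ A.finite_toSet)
    (hB ▸ B.finite_toSet)
  rw [hA, hB] at hp
  rw [hB] at hlt
  refine ⟨(hp.finsetCard_eq p).symm, fun s => card_le_card_of_injOn p ?_ ?_⟩
  · intro b hb
    rw [coe_filter] at hb ⊢
    exact ⟨hp.mapsTo hb.1, (hlt b hb.1).trans_le hb.2⟩
  · exact hp.injOn.mono (coe_subset.2 (filter_subset _ _))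

/-! ### A noncrossing relation is determined by the ends of its arcs -/

-- If `p < q`, then the class of `q` for `r` would continue beyond `b` and cross the arc from `p`
-- to `b`.
lemma IsNoncrossingRel.le_of_isGreatest (hr : IsNoncrossingRel r)
    (hl : leftEnds s ⊆ leftEnds r) {b p q : α} (hrs : ∀ x y, x < b → y < b → r x y → s x y)
    (hp : IsGreatest {x | x < b ∧ r x b} p) (hq : IsGreatest {x | x < b ∧ s x b} q) :
    q ≤ p := by
  by_contra! hpq
  have not_rel : ¬ r q b := fun h => (hp.2 ⟨hq.1.1, h⟩).not_gt hpq
  obtain ⟨y, hqy, hrel⟩ := hl ⟨b, hq.1⟩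
  rcases lt_trichotomy y b with hyb | rfl | hby
  · have hsy : s y b := s.trans (s.symm (hrs q y hq.1.1 hyb hrel)) hq.1.2
    exact (hq.2 ⟨hyb, hsy⟩).not_gt hqy
  · exact not_rel hrel
  · have hrpq : r p q := hr hpq hq.1.1 hby hp.1.2 hrel
    exact not_rel (r.trans (r.symm hrpq) hp.1.2)

theorem IsNoncrossingRel.eq_of_ends_eq (hr : IsNoncrossingRel r) (hs : IsNoncrossingRel s)
    (hl : leftEnds r = leftEnds s) (hR : rightEnds r = rightEnds s)
    (hlfin : (leftEnds r).Finite) (hRfin : (rightEnds r).Finite) : r = s := by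
  suffices key : ∀ b, ∀ x < b, (r x b ↔ s x b) by
    ext x y
    rcases lt_trichotomy x y with h | rfl | h
    · exact key y x h
    · exact iff_of_true (r.refl x) (s.refl x)
    · rw [r.comm', s.comm', key x y h]
  by_contra hne
  simp only [not_forall] at hne
  obtain ⟨c, x, hxc, hx⟩ := hne
  have hbad : {b | ∃ x < b, ¬ (r x b ↔ s x b)} ⊆ rightEnds r := by
    rintro b ⟨x, hxb, hx⟩
    by_cases h : r x b
    · exact ⟨x, hxb, h⟩
    · exact hR ▸ ⟨x, hxb, by tauto⟩
  obtain ⟨b, hb, hmin⟩ := Set.exists_min_image _ id (hRfin.subset hbad)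
    ⟨c, x, hxc, hx⟩
  have agree : ∀ x y, x < b → y < b → (r x y ↔ s x y) := by
    have agree_of_lt : ∀ x y, x < y → y < b → (r x y ↔ s x y) := fun x y hxy hyb =>
      by_contra fun h => (hmin y ⟨x, hxy, h⟩).not_gt hyb
    intro x y hx hy
    rcases lt_trichotomy x y with h | rfl | h
    · exact agree_of_lt x y h hy
    · exact iff_of_true (r.refl x) (s.refl x)
    · rw [r.comm', s.comm', agree_of_lt y x h hx]
  obtain ⟨p, hp⟩ := exists_isGreatest_lt_rel hlfin (hbad hb)
  obtain ⟨q, hq⟩ := exists_isGreatest_lt_rel (hl ▸ hlfin) (hR ▸ hbad hb)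
  obtain rfl : p = q := le_antisymm
    (hs.le_of_isGreatest hl.le (fun x y hx hy => (agree x y hx hy).2) hq hp)
    (hr.le_of_isGreatest hl.ge (fun x y hx hy => (agree x y hx hy).1) hp hq)
  obtain ⟨x, hxb, hx⟩ := hb
  refine hx ⟨fun h => ?_, fun h => ?_⟩
  · exact s.trans ((agree x p hxb hp.1.1).1 (r.trans h (r.symm hp.1.2))) hq.1.2
  · exact r.trans ((agree x p hxb hp.1.1).2 (s.trans h (s.symm hq.1.2))) hp.1.2

/-! ### Every ballot pair is realized -/

/-- The relation obtained from `r` by moving `a` into the class of `b`. -/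
def moveToClass (r : Setoid α) (a b : α) : Setoid α := r.comap (Function.update id a b)

section MoveToClass

variable {a b : α}

lemma moveToClass_rel_iff_of_ne {x y : α} (hx : x ≠ a) (hy : y ≠ a) :
    moveToClass r a b x y ↔ r x y := by
  rw [moveToClass, Setoid.comap_rel, Function.update_of_ne hx, Function.update_of_ne hy, id, id]

lemma moveToClass_rel_left_iff {x : α} (hx : x ≠ a) : moveToClass r a b a x ↔ r b x := by
  rw [moveToClass, Setoid.comap_rel, Function.update_self, Function.update_of_ne hx, id]

lemma eq_of_rel_of_mem_Ico (hl : ∀ x ∈ Set.Ico a b, x ∉ leftEnds r)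
    (hR : ∀ x ≤ b, x ∉ rightEnds r) {x y : α} (hx : x ∈ Set.Ico a b) (hxy : r x y) : y = x :=
  eq_of_rel_of_notMem_ends (hl x hx) (hR x hx.2.le) hxy

lemma leftEnds_moveToClass (hab : a < b) (hl : ∀ x ∈ Set.Ico a b, x ∉ leftEnds r)
    (hR : ∀ x ≤ b, x ∉ rightEnds r) :
    leftEnds (moveToClass r a b) = insert a (leftEnds r) := by
  have isolated {y : α} : r a y → y = a := eq_of_rel_of_mem_Ico hl hR ⟨le_rfl, hab⟩
  ext x
  rw [Set.mem_insert_iff]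
  constructor
  · rintro ⟨y, hxy, hrel⟩
    rcases eq_or_ne x a with hxa | hxa
    · exact Or.inl hxa
    rcases eq_or_ne y a with rfl | hya
    · have hbx := (moveToClass_rel_left_iff hxa).1 ((moveToClass r y b).symm hrel)
      exact absurd ⟨x, hxy.trans hab, r.symm hbx⟩ (hR b le_rfl)
    · exact Or.inr ⟨y, hxy, (moveToClass_rel_iff_of_ne hxa hya).1 hrel⟩
  · rintro (rfl | ⟨y, hxy, hrel⟩)
    · exact ⟨b, hab, (moveToClass_rel_left_iff hab.ne').2 (r.refl b)⟩
    · have hxa : x ≠ a := by rintro rfl; exact hxy.ne' (isolated hrel)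
      have hya : y ≠ a := by rintro rfl; exact hxy.ne (isolated (r.symm hrel))
      exact ⟨y, hxy, (moveToClass_rel_iff_of_ne hxa hya).2 hrel⟩

lemma rightEnds_moveToClass (hab : a < b) (hl : ∀ x ∈ Set.Ico a b, x ∉ leftEnds r)
    (hR : ∀ x ≤ b, x ∉ rightEnds r) :
    rightEnds (moveToClass r a b) = insert b (rightEnds r) := by
  have isolated {y : α} : r a y → y = a := eq_of_rel_of_mem_Ico hl hR ⟨le_rfl, hab⟩
  ext x
  rw [Set.mem_insert_iff]
  constructor
  · rintro ⟨y, hyx, hrel⟩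
    rcases eq_or_ne x a with rfl | hxa
    · have hby := (moveToClass_rel_left_iff hyx.ne).1 ((moveToClass r x b).symm hrel)
      exact absurd ⟨y, hyx.trans hab, r.symm hby⟩ (hR b le_rfl)
    rcases eq_or_ne y a with rfl | hya
    · have hbx := (moveToClass_rel_left_iff hxa).1 hrel
      rcases lt_trichotomy x b with h | h | h
      · exact absurd ⟨x, h, r.symm hbx⟩ (hR b le_rfl)
      · exact Or.inl h
      · exact Or.inr ⟨b, h, hbx⟩
    · exact Or.inr ⟨y, hyx, (moveToClass_rel_iff_of_ne hya hxa).1 hrel⟩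
  · rintro (rfl | ⟨y, hyx, hrel⟩)
    · exact ⟨a, hab, (moveToClass_rel_left_iff hab.ne').2 (r.refl x)⟩
    · have hxa : x ≠ a := by rintro rfl; exact hyx.ne (isolated (r.symm hrel))
      have hya : y ≠ a := by rintro rfl; exact hyx.ne' (isolated hrel)
      exact ⟨y, hyx, (moveToClass_rel_iff_of_ne hya hxa).2 hrel⟩

-- The elements strictly between `a` and `b` stay isolated, and on the complement of this
-- interval the map that sends `a` to `b` is monotone.
lemma IsNoncrossingRel.moveToClass (hr : IsNoncrossingRel r) (hab : a < b)
    (hl : ∀ x ∈ Set.Ico a b, x ∉ leftEnds r) (hR : ∀ x ≤ b, x ∉ rightEnds r) :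
    IsNoncrossingRel (moveToClass r a b) := by
  have notMem_Ioo : ∀ {x y}, QtN.moveToClass r a b x y → x ≠ y → x ∉ Set.Ioo a b := by
    intro x y hxy hne hx
    have hl' : x ∉ leftEnds (QtN.moveToClass r a b) := by
      rw [leftEnds_moveToClass hab hl hR]
      rintro (rfl | h)
      exacts [hx.1.false, hl x (Set.Ioo_subset_Ico_self hx) h]
    have hR' : x ∉ rightEnds (QtN.moveToClass r a b) := by
      rw [rightEnds_moveToClass hab hl hR]
      rintro (rfl | h)
      exacts [hx.2.false, hR x hx.2.le h]
    exact hne (eq_of_rel_of_notMem_ends hl' hR' hxy).symm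
  have monotone : ∀ {x y}, x ∉ Set.Ioo a b → y ∉ Set.Ioo a b → x < y →
      Function.update id a b x ≤ Function.update id a b y := by
    intro x y hx hy hxy
    simp only [Set.mem_Ioo, not_and, not_lt] at hx hy
    rcases eq_or_ne x a with hxa | hxa
    · rw [hxa, Function.update_self, Function.update_of_ne (hxa ▸ hxy.ne')]
      exact hy (hxa ▸ hxy)
    rcases eq_or_ne y a with hya | hya
    · rw [hya, Function.update_self, Function.update_of_ne hxa]
      exact ((hya ▸ hxy).trans hab).le
    · rw [Function.update_of_ne hxa, Function.update_of_ne hya]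
      exact hxy.le
  intro w x y z hwx hxy hyz hwy hxz
  have hw := notMem_Ioo hwy (hwx.trans hxy).ne
  have hx := notMem_Ioo hxz (hxy.trans hyz).ne
  have hy := notMem_Ioo ((QtN.moveToClass r a b).symm hwy) (hwx.trans hxy).ne'
  have hz := notMem_Ioo ((QtN.moveToClass r a b).symm hxz) (hxy.trans hyz).ne'
  exact hr.rel_of_le (monotone hw hx hwx) (monotone hx hy hxy) (monotone hy hz hyz) hwy hxz

end MoveToClass

lemma IsBallot.erase_left {A B : Finset α} {a b : α} (h : IsBallot A (insert b B)) (haA : a ∈ A)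
    (hab : a < b) (hb : ∀ x ∈ B, b < x) : IsBallot (A.erase a) B := by
  have hbB : b ∉ B := fun hbB => (hb b hbB).false
  refine ⟨?_, fun s => ?_⟩
  · rw [card_erase_of_mem haA, h.card_eq, card_insert_of_notMem hbB, Nat.add_sub_cancel]
  rcases lt_or_ge s b with hsb | hbs
  · have : {x ∈ B | x ≤ s} = ∅ := filter_eq_empty_iff.2 fun x hx => (hsb.trans (hb x hx)).not_ge
    simp [this]
  · have hle := h.card_le s
    rw [filter_insert, if_pos hbs, card_insert_of_notMem (by simp [hbB])] at hle
    have ha : a ∈ {x ∈ A | x < s} := mem_filter.2 ⟨haA, hab.trans_le hbs⟩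
    rw [filter_erase, card_erase_of_mem ha]
    exact Nat.le_sub_one_of_lt hle

-- The first right end `b` must be matched with the last left end `a` before it. Without this arc,
-- `a` is isolated and `b` is the smallest element of its class.
theorem IsBallot.exists_isNoncrossingRel {A B : Finset α} (h : IsBallot A B) :
    ∃ r : Setoid α, IsNoncrossingRel r ∧ leftEnds r = A ∧ rightEnds r = B := by
  induction B using Finset.induction_on_min generalizing A with
  | empty =>
    obtain rfl : A = ∅ := card_eq_zero.1 h.card_eq
    refine ⟨⊥, ?_, ?_, ?_⟩
    · rintro a b c d hab hbc - rfl -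
      exact absurd hbc hab.not_gt
    · simp [leftEnds]
    · simp [rightEnds]
  | insert b B hb ih =>
    have hne : {a ∈ A | a < b}.Nonempty :=
      card_pos.1 <| (card_pos.2 ⟨b, by simp⟩).trans_le (h.card_le b)
    obtain ⟨a, ha, hmax⟩ := exists_max_image _ id hne
    obtain ⟨haA, hab⟩ := mem_filter.1 ha
    obtain ⟨r, hr, hrA, hrB⟩ := ih (h.erase_left haA hab hb)
    have hl : ∀ x ∈ Set.Ico a b, x ∉ leftEnds r := by
      intro x hx hxl
      obtain ⟨hxa, hxA⟩ := mem_erase.1 (mem_coe.1 (hrA ▸ hxl))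
      exact hxa ((hmax x (mem_filter.2 ⟨hxA, hx.2⟩)).antisymm hx.1)
    have hR : ∀ x ≤ b, x ∉ rightEnds r := fun x hxb hxR =>
      hxb.not_gt (hb x (mem_coe.1 (hrB ▸ hxR)))
    refine ⟨moveToClass r a b, hr.moveToClass hab hl hR, ?_, ?_⟩
    · rw [leftEnds_moveToClass hab hl hR, hrA, ← coe_insert, insert_erase haA]
    · rw [rightEnds_moveToClass hab hl hR, hrB, ← coe_insert]

end Ends

/-! ### Noncrossing partitions and ballot pairs -/

/-- The pairs of left and right ends that occur for `k - 1` arcs on `{1, …, n}`. -/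
abbrev BallotPair (n k : ℕ) : Type :=
  {p : Finset ℕ × Finset ℕ //
    p.1 ⊆ Icc 1 n ∧ p.2 ⊆ Icc 1 n ∧ IsBallot p.1 p.2 ∧ #p.2 + 1 = k}

lemma fmin_mem {β : Finset ℕ} (hβ : β.Nonempty) : fmin β ∈ β := by
  rw [fmin, dif_pos hβ]
  exact β.min'_mem hβ

lemma fmin_le {β : Finset ℕ} {x : ℕ} (hx : x ∈ β) : fmin β ≤ x := by
  rw [fmin, dif_pos ⟨x, hx⟩]
  exact β.min'_le x hx

namespace SetPartition

open scoped Classical in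
/-- The partition of `{1, …, n}` into the traces of the classes of `r`. -/
noncomputable def ofSetoid (n : ℕ) (r : Setoid ℕ) : SetPartition n where
  blocks := (Icc 1 n).image fun x => {y ∈ Icc 1 n | r x y}
  not_empty_mem h := by
    obtain ⟨x, hx, hempty⟩ := mem_image.1 h
    exact notMem_empty x (hempty ▸ mem_filter.2 ⟨hx, r.refl x⟩)
  cover i := by
    simp only [exists_mem_image, mem_filter]
    exact ⟨fun hi => ⟨i, hi, hi, r.refl i⟩, fun ⟨_, _, hi, _⟩ => hi⟩
  disjoint := by
    simp only [forall_mem_image]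
    intro x _ y _ hne
    contrapose! hne
    obtain ⟨z, hxz, hyz⟩ := not_disjoint_iff.1 hne
    have hxy : r x y := r.trans (mem_filter.1 hxz).2 (r.symm (mem_filter.1 hyz).2)
    exact filter_congr fun w _ => ⟨r.trans (r.symm hxy), r.trans hxy⟩

variable {n : ℕ} {P : SetPartition n} {r : Setoid ℕ} {β γ : Finset ℕ} {x y : ℕ}

lemma mem_blocks_ofSetoid_iff :
    β ∈ (ofSetoid n r).blocks ↔ ∃ x ∈ Icc 1 n, ∀ y, y ∈ β ↔ y ∈ Icc 1 n ∧ r x y := by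
  simp only [ofSetoid, mem_image, Finset.ext_iff, mem_filter, iff_comm]

lemma eq_of_mem_of_mem (hβ : β ∈ P.blocks) (hγ : γ ∈ P.blocks) (hxβ : x ∈ β) (hxγ : x ∈ γ) :
    β = γ := by
  by_contra hne
  exact disjoint_left.1 (P.disjoint β hβ γ hγ hne) hxβ hxγ

lemma nonempty_of_mem_blocks (hβ : β ∈ P.blocks) : β.Nonempty :=
  nonempty_iff_ne_empty.2 fun h => P.not_empty_mem (h ▸ hβ)

/-- The relation of lying in the same block; the numbers outside `{1, …, n}` are isolated. -/
def toSetoid (P : SetPartition n) : Setoid ℕ where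
  r x y := x = y ∨ ∃ β ∈ P.blocks, x ∈ β ∧ y ∈ β
  iseqv :=
    { refl := fun _ => Or.inl rfl
      symm := by
        rintro x y (rfl | ⟨β, hβ, hx, hy⟩)
        exacts [Or.inl rfl, Or.inr ⟨β, hβ, hy, hx⟩]
      trans := by
        rintro x y z (rfl | ⟨β, hβ, hx, hy⟩) (rfl | ⟨γ, hγ, hy', hz⟩)
        · exact Or.inl rfl
        · exact Or.inr ⟨γ, hγ, hy', hz⟩
        · exact Or.inr ⟨β, hβ, hx, hy⟩
        · exact Or.inr ⟨β, hβ, hx, eq_of_mem_of_mem hβ hγ hy hy' ▸ hz⟩ }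

lemma toSetoid_iff_of_mem (hβ : β ∈ P.blocks) (hx : x ∈ β) : P.toSetoid x y ↔ y ∈ β := by
  refine ⟨?_, fun hy => Or.inr ⟨β, hβ, hx, hy⟩⟩
  rintro (rfl | ⟨γ, hγ, hx', hy⟩)
  exacts [hx, eq_of_mem_of_mem hβ hγ hx hx' ▸ hy]

lemma mem_blocks_iff : β ∈ P.blocks ↔ ∃ x ∈ Icc 1 n, ∀ y, y ∈ β ↔ P.toSetoid x y := by
  constructor
  · intro hβ
    obtain ⟨x, hx⟩ := nonempty_of_mem_blocks hβ
    exact ⟨x, (P.cover x).2 ⟨β, hβ, hx⟩, fun y => (toSetoid_iff_of_mem hβ hx).symm⟩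
  · rintro ⟨x, hx, h⟩
    obtain ⟨γ, hγ, hxγ⟩ := (P.cover x).1 hx
    have : β = γ := Finset.ext fun y => (h y).trans (toSetoid_iff_of_mem hγ hxγ)
    exact this ▸ hγ

lemma toSetoid_injective : Function.Injective (toSetoid : SetPartition n → Setoid ℕ) := by
  intro P Q h
  have hblocks : P.blocks = Q.blocks := by
    ext β
    rw [mem_blocks_iff, mem_blocks_iff, h]
  cases P
  cases Q
  congr

lemma mem_Icc_of_toSetoid (h : P.toSetoid x y) (hxy : x ≠ y) : x ∈ Icc 1 n := by
  obtain rfl | ⟨β, hβ, hx, -⟩ := h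
  exacts [absurd rfl hxy, (P.cover x).2 ⟨β, hβ, hx⟩]

lemma isNoncrossingRel_toSetoid_iff : IsNoncrossingRel P.toSetoid ↔ IsNoncrossing P.blocks := by
  constructor
  · intro h a b c d hab hbc hcd β hβ γ hγ ha hc hb hd
    have hrel : P.toSetoid a b :=
      h hab hbc hcd ((toSetoid_iff_of_mem hβ ha).2 hc) ((toSetoid_iff_of_mem hγ hb).2 hd)
    exact eq_of_mem_of_mem hβ hγ ((toSetoid_iff_of_mem hβ ha).1 hrel) hb
  · rintro h a b c d hab hbc hcd (rfl | ⟨β, hβ, ha, hc⟩) (rfl | ⟨γ, hγ, hb, hd⟩)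
    · exact absurd hbc hab.not_gt
    · exact absurd hbc hab.not_gt
    · exact absurd hcd hbc.not_gt
    · exact Or.inr ⟨β, hβ, ha, h a b c d hab hbc hcd β hβ γ hγ ha hc hb hd ▸ hb⟩

lemma toSetoid_ofSetoid (hl : leftEnds r ⊆ Icc 1 n) (hr : rightEnds r ⊆ Icc 1 n) :
    (ofSetoid n r).toSetoid = r := by
  have mem_Icc_of_rel {x y : ℕ} (h : r x y) (hxy : x ≠ y) : x ∈ Icc 1 n :=
    hxy.lt_or_gt.elim (fun hlt => hl ⟨y, hlt, h⟩) fun hgt => hr ⟨y, hgt, r.symm h⟩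
  ext x y
  constructor
  · rintro (rfl | ⟨β, hβ, hx, hy⟩)
    · exact r.refl x
    · obtain ⟨z, -, hz⟩ := mem_blocks_ofSetoid_iff.1 hβ
      exact r.trans (r.symm ((hz x).1 hx).2) ((hz y).1 hy).2
  · intro h
    refine or_iff_not_imp_left.2 fun hxy => ?_
    have hx := mem_Icc_of_rel h hxy
    have hy := mem_Icc_of_rel (r.symm h) (Ne.symm hxy)
    obtain ⟨β, hβ, hxβ⟩ := ((ofSetoid n r).cover x).1 hx
    obtain ⟨z, -, hz⟩ := mem_blocks_ofSetoid_iff.1 hβ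
    exact ⟨β, hβ, hxβ, (hz y).2 ⟨hy, r.trans ((hz x).1 hxβ).2 h⟩⟩

open scoped Classical in
/-- The left ends of the arcs of `P`, as a finite set. -/
noncomputable def leftEnds (P : SetPartition n) : Finset ℕ :=
  {x ∈ Icc 1 n | x ∈ QtN.leftEnds P.toSetoid}

open scoped Classical in
/-- The right ends of the arcs of `P`, as a finite set. -/
noncomputable def rightEnds (P : SetPartition n) : Finset ℕ :=
  {x ∈ Icc 1 n | x ∈ QtN.rightEnds P.toSetoid}

lemma leftEnds_subset : P.leftEnds ⊆ Icc 1 n := by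
  classical exact filter_subset _ _

lemma rightEnds_subset : P.rightEnds ⊆ Icc 1 n := by
  classical exact filter_subset _ _

lemma leftEnds_toSetoid : QtN.leftEnds P.toSetoid = P.leftEnds := by
  classical
  refine Set.ext fun x => (Iff.trans mem_filter (and_iff_right_of_imp ?_)).symm
  rintro ⟨y, hlt, hrel⟩
  exact mem_Icc_of_toSetoid hrel hlt.ne

lemma rightEnds_toSetoid : QtN.rightEnds P.toSetoid = P.rightEnds := by
  classical
  refine Set.ext fun x => (Iff.trans mem_filter (and_iff_right_of_imp ?_)).symm
  rintro ⟨y, hlt, hrel⟩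
  exact mem_Icc_of_toSetoid (P.toSetoid.symm hrel) hlt.ne'

lemma mem_rightEnds_iff : x ∈ P.rightEnds ↔ ∃ y < x, P.toSetoid y x :=
  (Set.ext_iff.1 rightEnds_toSetoid x).symm

lemma isBallot_ends : IsBallot P.leftEnds P.rightEnds :=
  isBallot_of_ends leftEnds_toSetoid rightEnds_toSetoid

lemma bijOn_fmin : Set.BijOn fmin P.blocks ↑(Icc 1 n \ P.rightEnds) := by
  have mem_block {β} (hβ : β ∈ P.blocks) : fmin β ∈ β := fmin_mem (nonempty_of_mem_blocks hβ)
  refine ⟨fun β hβ => ?_, fun β hβ γ hγ h => ?_, fun x hx => ?_⟩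
  · refine mem_sdiff.2 ⟨(P.cover _).2 ⟨β, hβ, mem_block hβ⟩, fun h => ?_⟩
    obtain ⟨y, hlt, hrel⟩ := mem_rightEnds_iff.1 h
    have hy : y ∈ β := (toSetoid_iff_of_mem hβ (mem_block hβ)).1 (P.toSetoid.symm hrel)
    exact (fmin_le hy).not_gt hlt
  · exact eq_of_mem_of_mem hβ hγ (mem_block hβ) (h ▸ mem_block hγ)
  · obtain ⟨hx, hxR⟩ := mem_sdiff.1 (mem_coe.1 hx)
    obtain ⟨β, hβ, hxβ⟩ := (P.cover x).1 hx
    refine ⟨β, hβ, (fmin_le hxβ).antisymm (not_lt.1 fun hlt => hxR ?_)⟩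
    exact mem_rightEnds_iff.2 ⟨fmin β, hlt, (toSetoid_iff_of_mem hβ (mem_block hβ)).2 hxβ⟩

lemma card_blocks_add_card_rightEnds : #P.blocks + #P.rightEnds = n := by
  rw [bijOn_fmin.finsetCard_eq, card_sdiff_add_card_eq_card rightEnds_subset, Nat.card_Icc,
    Nat.add_sub_cancel]

end SetPartition

theorem card_NC_eq_card_ballotPair {n k : ℕ} (hkn : k ≤ n) :
    Nat.card (NC n k) = Nat.card (BallotPair n k) := by
  have card_iff (P : SetPartition n) : #P.blocks = n - k + 1 ↔ #P.rightEnds + 1 = k := by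
    have := P.card_blocks_add_card_rightEnds
    omega
  let ends : NC n k → BallotPair n k := fun P => ⟨(P.1.leftEnds, P.1.rightEnds),
    P.1.leftEnds_subset, P.1.rightEnds_subset, P.1.isBallot_ends, (card_iff P.1).1 P.2.2⟩
  refine Nat.card_eq_of_bijective ends ⟨fun P Q h => ?_, fun ⟨(A, B), hA, hB, hAB, hcard⟩ => ?_⟩
  · have hl : P.1.leftEnds = Q.1.leftEnds := congrArg (·.1.1) h
    have hr : P.1.rightEnds = Q.1.rightEnds := congrArg (·.1.2) h
    have isNoncrossingRel (R : NC n k) := SetPartition.isNoncrossingRel_toSetoid_iff.2 R.2.1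
    refine Subtype.ext (SetPartition.toSetoid_injective ?_)
    apply (isNoncrossingRel P).eq_of_ends_eq (isNoncrossingRel Q)
    · rw [SetPartition.leftEnds_toSetoid, SetPartition.leftEnds_toSetoid, hl]
    · rw [SetPartition.rightEnds_toSetoid, SetPartition.rightEnds_toSetoid, hr]
    · exact SetPartition.leftEnds_toSetoid ▸ finite_toSet _
    · exact SetPartition.rightEnds_toSetoid ▸ finite_toSet _
  · obtain ⟨r, hr, hrA, hrB⟩ := hAB.exists_isNoncrossingRel
    let P := SetPartition.ofSetoid n r
    have hP : P.toSetoid = r := SetPartition.toSetoid_ofSetoid (hrA ▸ coe_subset.2 hA)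
      (hrB ▸ coe_subset.2 hB)
    have hPA : P.leftEnds = A :=
      coe_injective (by rw [← SetPartition.leftEnds_toSetoid, hP, hrA])
    have hPB : P.rightEnds = B :=
      coe_injective (by rw [← SetPartition.rightEnds_toSetoid, hP, hrB])
    exact ⟨⟨P, SetPartition.isNoncrossingRel_toSetoid_iff.1 (hP ▸ hr),
      (card_iff P).2 (hPB ▸ hcard)⟩, Subtype.ext (Prod.ext hPA hPB)⟩

/-! ### Parallelogram polyominoes and ballot pairs -/

section Paths

variable {w u l : List Step} {i c : ℕ}

lemma countE_add_countN (w : List Step) : countE w + countN w = w.length := by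
  induction w with
  | nil => rfl
  | cons s w ih => cases s <;> simp [countE, countN] at ih ⊢ <;> omega

lemma countE_take_add_countN_take (hi : i ≤ w.length) :
    countE (w.take i) + countN (w.take i) = i := by
  rw [countE_add_countN, List.length_take_of_le hi]

lemma countE_take_mono (w : List Step) : Monotone fun i => countE (w.take i) :=
  fun _ _ h => (List.take_sublist_take_left h).count_le _

lemma countN_take_mono (w : List Step) : Monotone fun i => countN (w.take i) :=
  fun _ _ h => (List.take_sublist_take_left h).count_le _

-- The east step in column `c` is taken after `i` steps.
lemma exists_colHeightsAux_eq (w : List Step) (h c : ℕ) (hc : c < countE w) :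
    ∃ i, i < w.length ∧ countE (w.take i) = c ∧ countE (w.take (i + 1)) = c + 1 ∧
      (colHeightsAux w h).getD c 0 = h + countN (w.take i) := by
  induction w generalizing h c with
  | nil => simp [countE] at hc
  | cons s w ih =>
    simp only [countE, countN] at hc ih ⊢
    rcases s with _ | _
    · rcases c with _ | c
      · exact ⟨0, by simp [colHeightsAux]⟩
      · obtain ⟨i, hi, hci, hci', hN⟩ := ih h c (by simpa using hc)
        exact ⟨i + 1, by simpa [colHeightsAux] using ⟨hi, hci, hci', hN⟩⟩
    · obtain ⟨i, hi, hci, hci', hN⟩ := ih (h + 1) c (by simpa using hc)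
      exact ⟨i + 1, by simpa [colHeightsAux] using ⟨hi, hci, hci', hN.trans (add_right_comm h 1 _)⟩⟩

lemma exists_colHeight_eq (hc : c < countE w) :
    ∃ i, i < w.length ∧ countE (w.take i) = c ∧ countE (w.take (i + 1)) = c + 1 ∧
      colHeight w c = countN (w.take i) := by
  simpa only [colHeight, Nat.zero_add] using exists_colHeightsAux_eq w 0 c hc

lemma colHeight_le_countN_take (hc : c < countE (w.take i)) :
    colHeight w c ≤ countN (w.take i) := by
  have hcw : c < countE w := hc.trans_le ((List.take_sublist i w).count_le _)
  obtain ⟨j, -, hj, -, hcol⟩ := exists_colHeight_eq hcw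
  rw [hcol]
  exact countN_take_mono w ((countE_take_mono w).reflect_lt (hj.trans_lt hc)).le

lemma countN_take_le_colHeight (hc : countE (w.take i) ≤ c) (hcw : c < countE w) :
    countN (w.take i) ≤ colHeight w c := by
  obtain ⟨j, -, -, hj, hcol⟩ := exists_colHeight_eq hcw
  rw [hcol]
  have hij : i < j + 1 := (countE_take_mono w).reflect_lt (hc.trans_lt (hj ▸ c.lt_succ_self))
  exact countN_take_mono w (Nat.le_of_lt_succ hij)

lemma forall_colHeight_le_iff (hE : countE l = countE u) (hN : countN l = countN u) :
    (∀ c < countE l, colHeight l c ≤ colHeight u c) ↔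
      ∀ i ≤ l.length, countN (l.take i) ≤ countN (u.take i) := by
  have hlen : u.length = l.length := by rw [← countE_add_countN, ← countE_add_countN, hE, hN]
  constructor
  · intro h i hi
    have hl := countE_take_add_countN_take hi
    have hu := countE_take_add_countN_take (hi.trans_eq hlen.symm)
    by_contra! hlt
    have hElt : countE (l.take i) < countE (u.take i) := by omega
    have hcol : countE (l.take i) < countE l :=
      hE ▸ hElt.trans_le ((List.take_sublist i u).count_le _)
    refine hlt.not_ge ?_
    calc countN (l.take i) ≤ colHeight l (countE (l.take i)) := countN_take_le_colHeight le_rfl hcol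
      _ ≤ colHeight u (countE (l.take i)) := h _ hcol
      _ ≤ countN (u.take i) := colHeight_le_countN_take hElt
  · intro h c hc
    obtain ⟨i, hi, hci, -, hcol⟩ := exists_colHeight_eq hc
    have hl := countE_take_add_countN_take hi.le
    have hu := countE_take_add_countN_take (hi.le.trans_eq hlen.symm)
    have hle := h i hi.le
    calc colHeight l c = countN (l.take i) := hcol
      _ ≤ countN (u.take i) := hle
      _ ≤ colHeight u c := countN_take_le_colHeight (by omega) (hE ▸ hc)

lemma mem_pathPts_iff {p : ℕ × ℕ} : p ∈ pathPts w ↔ ∃ i ≤ w.length, pathPos (w.take i) = p := by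
  simp [pathPts]

-- Paths can only meet after equally many steps, since a point of a path determines the number of
-- steps made so far.
lemma mem_pathPts_inter_iff (hlen : u.length = l.length) {p : ℕ × ℕ} :
    p ∈ pathPts u ∩ pathPts l ↔
      ∃ i ≤ l.length, pathPos (l.take i) = p ∧ countN (l.take i) = countN (u.take i) := by
  simp only [mem_inter, mem_pathPts_iff, pathPos, hlen]
  constructor
  · rintro ⟨⟨j, hj, rfl⟩, i, hi, h⟩
    obtain ⟨hE, hN⟩ := Prod.mk.inj h
    have hl := countE_take_add_countN_take hi
    have hu := countE_take_add_countN_take (hj.trans_eq hlen.symm)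
    obtain rfl : i = j := by omega
    exact ⟨i, hi, h, hN⟩
  · rintro ⟨i, hi, rfl, hN⟩
    have hl := countE_take_add_countN_take hi
    have hu := countE_take_add_countN_take (hi.trans_eq hlen.symm)
    exact ⟨⟨i, hi, Prod.ext (by simp only; omega) hN.symm⟩, i, hi, rfl⟩

lemma pathPts_inter_eq_iff (hlen : u.length = l.length) (hN : countN l = countN u) :
    pathPts u ∩ pathPts l = {(0, 0), (countE l, countN l)} ↔
      ∀ i, 0 < i → i < l.length → countN (l.take i) ≠ countN (u.take i) := by
  constructor
  · intro h i hi0 hi hNi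
    have hl := countE_take_add_countN_take hi.le
    have hmem := (mem_pathPts_inter_iff hlen).2 ⟨i, hi.le, rfl, hNi⟩
    have htotal := countE_add_countN l
    simp only [h, pathPos, mem_insert, mem_singleton, Prod.mk.injEq] at hmem
    omega
  · intro h
    ext p
    rw [mem_pathPts_inter_iff hlen, mem_insert, mem_singleton]
    constructor
    · rintro ⟨i, hi, rfl, hNi⟩
      rcases i.eq_zero_or_pos with rfl | hi0
      · exact Or.inl rfl
      rcases hi.eq_or_lt with rfl | hi
      · exact Or.inr (by rw [List.take_length]; rfl)
      · exact absurd hNi (h i hi0 hi)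
    · rintro (rfl | rfl)
      · exact ⟨0, Nat.zero_le _, rfl, rfl⟩
      · refine ⟨l.length, le_rfl, by rw [List.take_length]; rfl, ?_⟩
        rw [List.take_length, ← hlen, List.take_length, hN]

theorem above_and_meet_iff (hE : countE l = countE u) (hN : countN l = countN u) :
    ((∀ c < countE l, colHeight l c ≤ colHeight u c) ∧
        pathPts u ∩ pathPts l = {(0, 0), (countE l, countN l)}) ↔
      ∀ i, 0 < i → i < l.length → countN (l.take i) < countN (u.take i) := by
  have hlen : u.length = l.length := by rw [← countE_add_countN, ← countE_add_countN, hE, hN]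
  rw [forall_colHeight_le_iff hE hN, pathPts_inter_eq_iff hlen hN]
  constructor
  · rintro ⟨hle, hne⟩ i hi0 hi
    exact (hle i hi.le).lt_of_ne (hne i hi0 hi)
  · refine fun h => ⟨fun i hi => ?_, fun i hi0 hi => (h i hi0 hi).ne⟩
    rcases i.eq_zero_or_pos with rfl | hi0
    · rfl
    rcases hi.eq_or_lt with rfl | hi
    · rw [List.take_length, ← hlen, List.take_length, hN]
    · exact (h i hi0 hi).le

end Paths

section NorthTimes

variable {w : List Step} {S T A B : Finset ℕ} {m k n i : ℕ}

/-- The times at which the path `w` makes a north step, counted from `0`. -/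
def northTimes (w : List Step) : Finset ℕ := {i ∈ range w.length | w[i]? = some Step.N}

/-- The path with `n` steps whose north steps are made at the times in `S`. -/
def northPath (n : ℕ) (S : Finset ℕ) : List Step :=
  (List.range n).map fun i => if i ∈ S then Step.N else Step.E

lemma mem_northTimes_iff : i ∈ northTimes w ↔ w[i]? = some Step.N := by
  rw [northTimes, mem_filter, mem_range, and_iff_right_of_imp]
  exact fun h => (List.getElem?_eq_some_iff.1 h).1

lemma northTimes_subset_range (w : List Step) : northTimes w ⊆ range w.length :=
  filter_subset _ _

lemma length_northPath : (northPath n S).length = n := by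
  rw [northPath, List.length_map, List.length_range]

lemma northTimes_northPath (hS : S ⊆ range n) : northTimes (northPath n S) = S := by
  ext i
  have hlt (hi : i ∈ S) : i < n := mem_range.1 (hS hi)
  rw [mem_northTimes_iff, northPath, List.getElem?_map]
  by_cases hin : i < n
  · simp [hin]
  · simp [hin, mt hlt hin]

lemma northPath_northTimes (w : List Step) : northPath w.length (northTimes w) = w := by
  refine List.ext_getElem length_northPath fun i _ hi => ?_
  rcases hs : w[i] with _ | _ <;>
    simp [northPath, mem_northTimes_iff, List.getElem?_eq_getElem hi, hs]

lemma card_filter_northTimes_lt (w : List Step) (i : ℕ) :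
    #{j ∈ northTimes w | j < i} = countN (w.take i) := by
  induction i with
  | zero => simp [countN]
  | succ i ih =>
    have hdisj : Disjoint {j ∈ northTimes w | j < i} {j ∈ northTimes w | j = i} :=
      disjoint_filter.2 fun j _ => Nat.ne_of_lt
    simp only [Nat.lt_succ_iff_lt_or_eq, filter_or]
    rw [card_union_of_disjoint hdisj, ih, filter_eq', List.take_add_one, countN, countN,
      List.count_append, Nat.add_left_cancel_iff]
    simp only [mem_northTimes_iff]
    rcases w[i]? with _ | _ | _ <;> simp

lemma card_northTimes (w : List Step) : #(northTimes w) = countN w := by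
  rw [← List.take_length (l := w), ← card_filter_northTimes_lt, List.take_length,
    filter_true_of_mem]
  exact fun j hj => mem_range.1 (northTimes_subset_range w hj)

namespace Polyomino

lemma length_lower (P : Polyomino m k) : P.lower.length = m + k := by
  rw [← countE_add_countN, P.lowerE, P.lowerN]

lemma length_upper (P : Polyomino m k) : P.upper.length = m + k := by
  rw [← countE_add_countN, P.upperE, P.upperN]

lemma card_filter_northTimes_lower_lt (P : Polyomino m k) (hi0 : 0 < i) (hi : i < m + k) :
    #{j ∈ northTimes P.lower | j < i} < #{j ∈ northTimes P.upper | j < i} := by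
  obtain ⟨l, u, rfl, rfl, huE, huN, above, meet⟩ := P
  rw [card_filter_northTimes_lt, card_filter_northTimes_lt]
  exact (above_and_meet_iff huE.symm huN.symm).1 ⟨above, meet⟩ i hi0
    (hi.trans_eq (countE_add_countN l))

lemma eq_of_northTimes_eq {P Q : Polyomino m k} (hl : northTimes P.lower = northTimes Q.lower)
    (hu : northTimes P.upper = northTimes Q.upper) : P = Q := by
  have hlower : P.lower = Q.lower := by
    rw [← northPath_northTimes P.lower, ← northPath_northTimes Q.lower, hl, P.length_lower,
      Q.length_lower]
  have hupper : P.upper = Q.upper := by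
    rw [← northPath_northTimes P.upper, ← northPath_northTimes Q.upper, hu, P.length_upper,
      Q.length_upper]
  cases P
  cases Q
  congr

theorem exists_northTimes_eq (hS : S ⊆ range (m + k)) (hT : T ⊆ range (m + k)) (hSk : #S = k)
    (hTk : #T = k)
    (h : ∀ i, 0 < i → i < m + k → #{j ∈ T | j < i} < #{j ∈ S | j < i}) :
    ∃ P : Polyomino m k, northTimes P.lower = T ∧ northTimes P.upper = S := by
  have count_eq {R : Finset ℕ} (hR : R ⊆ range (m + k)) (hRk : #R = k) :
      countE (northPath (m + k) R) = m ∧ countN (northPath (m + k) R) = k := by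
    have hN : countN (northPath (m + k) R) = k := by
      rw [← card_northTimes, northTimes_northPath hR, hRk]
    have htotal := countE_add_countN (northPath (m + k) R)
    rw [length_northPath] at htotal
    exact ⟨by omega, hN⟩
  obtain ⟨hlE, hlN⟩ := count_eq hT hTk
  obtain ⟨huE, huN⟩ := count_eq hS hSk
  have hpoly := (above_and_meet_iff (hlE.trans huE.symm) (hlN.trans huN.symm)).2 <| by
    intro i hi0 hi
    rw [length_northPath] at hi
    rw [← card_filter_northTimes_lt, ← card_filter_northTimes_lt,
      northTimes_northPath hT, northTimes_northPath hS]
    exact h i hi0 hi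
  rw [hlE, hlN] at hpoly
  exact ⟨⟨_, _, hlE, hlN, huE, huN, hpoly.1, hpoly.2⟩, northTimes_northPath hT,
    northTimes_northPath hS⟩

end Polyomino

/-- The north times of the upper path encoded by the left ends `A`: the upper path starts with a
north step, and its further north steps are recorded by the times at which they start. -/
def upperTimes (A : Finset ℕ) : Finset ℕ := insert 0 A

/-- The north times of the lower path encoded by the right ends `B`: the lower path ends with a
north step, and its further north steps are recorded by the times at which they end. -/
def lowerTimes (n : ℕ) (B : Finset ℕ) : Finset ℕ := insert n (B.image (· - 1))

lemma upperTimes_subset_range (hA : A ⊆ Icc 1 n) : upperTimes A ⊆ range (n + 1) := by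
  grind [upperTimes]

lemma lowerTimes_subset_range (hB : B ⊆ Icc 1 n) : lowerTimes n B ⊆ range (n + 1) := by
  grind [lowerTimes]

lemma upperTimes_injOn : Set.InjOn upperTimes {A | A ⊆ Icc 1 n} := by
  have erase_zero (A) (hA : A ⊆ Icc 1 n) : (upperTimes A).erase 0 = A :=
    erase_insert fun h => by simpa using hA h
  intro A hA A' hA' h
  rw [← erase_zero A hA, h, erase_zero A' hA']

lemma image_add_one_image_sub_one (hB : B ⊆ Icc 1 n) : (B.image (· - 1)).image (· + 1) = B := by
  rw [image_image]
  exact (image_congr fun b hb => Nat.sub_add_cancel (mem_Icc.1 (hB hb)).1).trans image_id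

lemma notMem_image_sub_one (hB : B ⊆ Icc 1 n) : n ∉ B.image (· - 1) := by
  grind

lemma lowerTimes_injOn : Set.InjOn (lowerTimes n) {B | B ⊆ Icc 1 n} := by
  have image_erase (B) (hB : B ⊆ Icc 1 n) : ((lowerTimes n B).erase n).image (· + 1) = B := by
    rw [lowerTimes, erase_insert (notMem_image_sub_one hB), image_add_one_image_sub_one hB]
  intro B hB B' hB' h
  rw [← image_erase B hB, h, image_erase B' hB']

lemma exists_upperTimes_eq (hS : S ⊆ range (n + 1)) (h0 : 0 ∈ S) :
    ∃ A ⊆ Icc 1 n, upperTimes A = S :=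
  ⟨S.erase 0, by grind, insert_erase h0⟩

lemma exists_lowerTimes_eq (hT : T ⊆ range (n + 1)) (hn : n ∈ T) :
    ∃ B ⊆ Icc 1 n, lowerTimes n B = T :=
  ⟨(T.erase n).image (· + 1), by grind,
    by simp [lowerTimes, image_image, Function.comp_def, insert_erase hn]⟩

lemma injOn_sub_one (hB : B ⊆ Icc 1 n) : Set.InjOn (· - 1) (B : Set ℕ) :=
  fun b hb c hc h => by grind

lemma card_upperTimes (hA : A ⊆ Icc 1 n) : #(upperTimes A) = #A + 1 :=
  card_insert_of_notMem fun h => by simpa using hA h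

lemma card_lowerTimes (hB : B ⊆ Icc 1 n) : #(lowerTimes n B) = #B + 1 := by
  rw [lowerTimes, card_insert_of_notMem (notMem_image_sub_one hB),
    card_image_of_injOn (injOn_sub_one hB)]

lemma card_filter_upperTimes_lt (hA : A ⊆ Icc 1 n) (hi : 0 < i) :
    #{j ∈ upperTimes A | j < i} = #{a ∈ A | a < i} + 1 := by
  rw [upperTimes, filter_insert, if_pos hi, card_insert_of_notMem]
  grind

lemma card_filter_lowerTimes_lt (hB : B ⊆ Icc 1 n) (hi : i ≤ n) :
    #{j ∈ lowerTimes n B | j < i} = #{b ∈ B | b ≤ i} := by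
  rw [lowerTimes, filter_insert, if_neg hi.not_gt, filter_image, card_image_of_injOn]
  · congr 1; ext; grind
  · intro b hb c hc h; grind

theorem isBallot_iff_card_filter_times_lt (hA : A ⊆ Icc 1 n) (hB : B ⊆ Icc 1 n)
    (hcard : #A = #B) :
    IsBallot A B ↔
      ∀ i, 0 < i → i < n + 1 → #{j ∈ lowerTimes n B | j < i} < #{j ∈ upperTimes A | j < i} := by
  constructor
  · intro h i hi0 hi
    rw [card_filter_lowerTimes_lt hB (Nat.le_of_lt_succ hi), card_filter_upperTimes_lt hA hi0]
    exact Nat.lt_succ_of_le (h.card_le i)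
  · refine fun h => ⟨hcard, fun s => ?_⟩
    rcases s.eq_zero_or_pos with rfl | hs0
    · have hempty : {b ∈ B | b ≤ 0} = ∅ :=
        filter_eq_empty_iff.2 fun b hb => Nat.not_le.2 (mem_Icc.1 (hB hb)).1
      rw [hempty, card_empty]
      exact Nat.zero_le _
    rcases le_or_gt s n with hs | hs
    · have hlt := h s hs0 (Nat.lt_succ_of_le hs)
      rw [card_filter_lowerTimes_lt hB hs, card_filter_upperTimes_lt hA hs0] at hlt
      exact Nat.le_of_lt_succ hlt
    · rw [filter_true_of_mem fun a ha => (mem_Icc.1 (hA ha)).2.trans_lt hs, hcard]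
      exact card_filter_le _ _

namespace Polyomino

lemma northTimes_lower_subset (P : Polyomino m k) : northTimes P.lower ⊆ range (m + k) :=
  P.length_lower ▸ northTimes_subset_range P.lower

lemma northTimes_upper_subset (P : Polyomino m k) : northTimes P.upper ⊆ range (m + k) :=
  P.length_upper ▸ northTimes_subset_range P.upper

lemma card_northTimes_lower (P : Polyomino m k) : #(northTimes P.lower) = k :=
  (card_northTimes P.lower).trans P.lowerN

lemma card_northTimes_upper (P : Polyomino m k) : #(northTimes P.upper) = k :=
  (card_northTimes P.upper).trans P.upperN

lemma zero_mem_northTimes_upper (P : Polyomino m k) (h : 1 < m + k) :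
    0 ∈ northTimes P.upper := by
  have hlt := P.card_filter_northTimes_lower_lt one_pos h
  obtain ⟨j, hj⟩ := card_pos.1 ((Nat.zero_le _).trans_lt hlt)
  obtain ⟨hmem, hlt⟩ := mem_filter.1 hj
  exact Nat.lt_one_iff.1 hlt ▸ hmem

lemma last_mem_northTimes_lower (P : Polyomino m k) (hn : 0 < n) (hmk : m + k = n + 1) :
    n ∈ northTimes P.lower := by
  by_contra hnotMem
  have lt_of_mem : ∀ j ∈ northTimes P.lower, j < n := by
    intro j hj
    have hlt := mem_range.1 (hmk ▸ P.northTimes_lower_subset hj)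
    exact (Nat.le_of_lt_succ hlt).lt_of_ne (ne_of_mem_of_not_mem hj hnotMem)
  have hlt := P.card_filter_northTimes_lower_lt hn (by omega)
  rw [filter_true_of_mem lt_of_mem, card_northTimes_lower] at hlt
  exact hlt.not_ge ((card_filter_le _ _).trans_eq P.card_northTimes_upper)

theorem exists_ballotPair (P : Polyomino m k) (hn : 0 < n) (hmk : m + k = n + 1) :
    ∃ p : BallotPair n k,
      northTimes P.upper = upperTimes p.1.1 ∧ northTimes P.lower = lowerTimes n p.1.2 := by
  have h0 := P.zero_mem_northTimes_upper (by omega)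
  have hlast := P.last_mem_northTimes_lower hn hmk
  obtain ⟨A, hA, hPA⟩ := exists_upperTimes_eq (hmk ▸ P.northTimes_upper_subset) h0
  obtain ⟨B, hB, hPB⟩ := exists_lowerTimes_eq (hmk ▸ P.northTimes_lower_subset) hlast
  have hAk : #A + 1 = k := by rw [← card_upperTimes hA, hPA, P.card_northTimes_upper]
  have hBk : #B + 1 = k := by rw [← card_lowerTimes hB, hPB, P.card_northTimes_lower]
  have hAB : #A = #B := Nat.add_right_cancel (hAk.trans hBk.symm)
  refine ⟨⟨(A, B), hA, hB, ?_, hBk⟩, hPA.symm, hPB.symm⟩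
  rw [isBallot_iff_card_filter_times_lt hA hB hAB, hPA, hPB]
  exact fun i hi0 hi => P.card_filter_northTimes_lower_lt hi0 (hmk ▸ hi)

end Polyomino

theorem BallotPair.exists_polyomino (p : BallotPair n k) (hmk : m + k = n + 1) :
    ∃ P : Polyomino m k,
      northTimes P.lower = lowerTimes n p.1.2 ∧ northTimes P.upper = upperTimes p.1.1 := by
  obtain ⟨⟨A, B⟩, hA, hB, hAB, hk⟩ := p
  have hlt := (isBallot_iff_card_filter_times_lt hA hB hAB.card_eq).1 hAB
  rw [← hmk] at hlt
  exact Polyomino.exists_northTimes_eq (hmk ▸ upperTimes_subset_range hA)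
    (hmk ▸ lowerTimes_subset_range hB) ((card_upperTimes hA).trans (hAB.card_eq ▸ hk))
    ((card_lowerTimes hB).trans hk) hlt

theorem card_ballotPair_eq_card_polyomino (hn : 0 < n) (hmk : m + k = n + 1) :
    Nat.card (BallotPair n k) = Nat.card (Polyomino m k) := by
  choose toPolyomino hlower hupper using fun p : BallotPair n k => p.exists_polyomino hmk
  refine Nat.card_eq_of_bijective toPolyomino ⟨fun p q h => ?_, fun P => ?_⟩
  · have hA : upperTimes p.1.1 = upperTimes q.1.1 := by rw [← hupper, h, hupper]
    have hB : lowerTimes n p.1.2 = lowerTimes n q.1.2 := by rw [← hlower, h, hlower]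
    exact Subtype.ext (Prod.ext (upperTimes_injOn p.2.1 q.2.1 hA)
      (lowerTimes_injOn p.2.2.1 q.2.2.1 hB))
  · obtain ⟨p, hPu, hPl⟩ := P.exists_ballotPair hn hmk
    exact ⟨p, Polyomino.eq_of_northTimes_eq ((hlower p).trans hPl.symm)
      ((hupper p).trans hPu.symm)⟩

end NorthTimes

/-- For all `n ≥ k ≥ 1`, the number of noncrossing partitions of `{1, …, n}` with
exactly `n - k + 1` blocks equals the number of parallelogram polyominoes of size
`(n-k+1) × k`. -/
theorem card_NC_eq_card_PP (n k : ℕ) (hk : 1 ≤ k) (hkn : k ≤ n) :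
    Nat.card (NC n k) = Nat.card (Polyomino (n - k + 1) k) :=
  (card_NC_eq_card_ballotPair hkn).trans
    (card_ballotPair_eq_card_polyomino (hk.trans hkn) (by omega))

end QtN
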